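/- Let D be an ADF. Every strongly admissible interpretation w of D satisfies w ≤_i grd(D); that is, the grounded interpretation is the greatest strongly admissible interpretation of D with respect to ≤_i. -/

import Mathlib

/-!
The grounded interpretation is reached by iterating `Gamma D` from the trivial interpretation,
because the iteration increases and the set of arguments is finite. Each decided argument
therefore has a rank, the first stage at which it is decided, and its value is forced by parents
of smaller rank. Unfolding these justifications strictly lowers the rank, so it never revisits an
excluded argument; hence the grounded interpretation is strongly admissible (`sjrel_of_stage`).

Conversely, a strong justification is a well-founded derivation, and induction on it shows that
every fixed point of `Gamma D` assigns the justified value (`SJrel.eq_fixed`). Thus every strongly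
admissible interpretation lies below the grounded one.
-/

/-- Three truth values: true, false, undecided. -/
inductive TV : Type
  | t | f | u
deriving DecidableEq, Repr

/-- The information order on truth values: u <_i t and u <_i f. -/
def TV.ile (x y : TV) : Prop := x = TV.u ∨ x = y

/-- The information order on interpretations, extended pointwise. -/
def ILE {A : Type*} (v w : A → TV) : Prop := ∀ a, TV.ile (v a) (w a)

/-- An abstract dialectical framework on a set of arguments `A`:
each argument `a` has an acceptance condition `C a : (A → Bool) → Bool`. -/
structure ADF (A : Type*) where
  C : A → (A → Bool) → Bool

/-- The trivial interpretation mapping every argument to undecided. -/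
def trivialInterp (A : Type*) : A → TV := fun _ => TV.u

/-- The parents of `a` are the arguments on which its acceptance condition depends. -/
def ADF.parents {A : Type*} [DecidableEq A] (D : ADF A) (a : A) : Set A :=
  {b | ∃ w : A → Bool, D.C a w ≠ D.C a (Function.update w b (!w b))}

/-- A two-valued assignment `w` completes a three-valued interpretation `v`. -/
def Completes {A : Type*} (w : A → Bool) (v : A → TV) : Prop :=
  ∀ b, (v b = TV.t → w b = true) ∧ (v b = TV.f → w b = false)

/-- `φ` is irrefutable under `v`: every completion of `v` makes `φ` true. -/
def Irrefutable {A : Type*} (φ : (A → Bool) → Bool) (v : A → TV) : Prop :=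
  ∀ w : A → Bool, Completes w v → φ w = true

/-- `φ` is unsatisfiable under `v`: every completion of `v` makes `φ` false. -/
def Unsat {A : Type*} (φ : (A → Bool) → Bool) (v : A → TV) : Prop :=
  ∀ w : A → Bool, Completes w v → φ w = false

open Classical in
/-- The characteristic operator Γ_D of an ADF. -/
noncomputable def Gamma {A : Type*} (D : ADF A) (v : A → TV) : A → TV := fun a =>
  if Irrefutable (D.C a) v then TV.t
  else if Unsat (D.C a) v then TV.f
  else TV.u

open Classical in
/-- `v|_P`: agrees with `v` on `P` and is undecided elsewhere. -/
noncomputable def restrictTV {A : Type*} (v : A → TV) (P : Set A) : A → TV :=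
  fun b => if b ∈ P then v b else TV.u

/-- Strong acceptability/deniability of an argument with respect to interpretation `v`
and set `S`, relative to an excluded set `E` (the first index). An argument `a` with
`v a = t` (resp. `v a = f`) is strongly acceptable (resp. strongly deniable) iff there is
`P ⊆ (parents a ∩ S) \ E` with `φ_a^{v|_P}` irrefutable (resp. unsatisfiable) and every
`p ∈ P` strongly acceptable/deniable relative to `E ∪ {p}`. -/
inductive SJrel {A : Type*} [DecidableEq A] (D : ADF A) (v : A → TV) (S : Set A) :
    Set A → A → Prop
  | acc (E : Set A) (a : A) (P : Set A)
      (ha : v a = TV.t)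
      (hP : P ⊆ (D.parents a ∩ S) \ E)
      (hirr : Irrefutable (D.C a) (restrictTV v P))
      (hrec : ∀ p ∈ P, SJrel D v S (E ∪ {p}) p) : SJrel D v S E a
  | den (E : Set A) (a : A) (P : Set A)
      (ha : v a = TV.f)
      (hP : P ⊆ (D.parents a ∩ S) \ E)
      (hunsat : Unsat (D.C a) (restrictTV v P))
      (hrec : ∀ p ∈ P, SJrel D v S (E ∪ {p}) p) : SJrel D v S E a

/-- `a` is strongly acceptable/deniable w.r.t. `v` and `S`
(i.e., relative to the excluded set `{a}`). -/
def StronglyJustified {A : Type*} [DecidableEq A] (D : ADF A) (v : A → TV)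
    (S : Set A) (a : A) : Prop :=
  SJrel D v S {a} a

/-- `S` is a least set for `a` with respect to `v`. -/
def LeastSet {A : Type*} [DecidableEq A] (D : ADF A) (v : A → TV)
    (a : A) (S : Set A) : Prop :=
  StronglyJustified D v S a ∧
  ∀ S' : Set A, S'.ncard < S.ncard → ¬ StronglyJustified D v S' a

/-- An interpretation is strongly admissible iff every argument assigned `t`/`f`
is strongly acceptable/deniable w.r.t. `v` and some set `S`. -/
def StronglyAdmissible {A : Type*} [DecidableEq A] (D : ADF A) (v : A → TV) : Prop :=
  ∀ a : A, v a ≠ TV.u → ∃ S : Set A, StronglyJustified D v S a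

/-- `g` is the grounded interpretation of `D`: the least fixed point of `Γ_D`. -/
def IsGrounded {A : Type*} (D : ADF A) (g : A → TV) : Prop :=
  Gamma D g = g ∧ ∀ w : A → TV, Gamma D w = w → ILE g w

/-- An interpretation is admissible iff `v ≤_i Γ_D(v)`. -/
def Admissible {A : Type*} (D : ADF A) (v : A → TV) : Prop :=
  ILE v (Gamma D v)

/-- An interpretation is conflict-free. -/
def ConflictFree {A : Type*} (D : ADF A) (v : A → TV) : Prop :=
  ∀ a : A, (v a = TV.t → ∃ w : A → Bool, Completes w v ∧ D.C a w = true) ∧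
           (v a = TV.f → Unsat (D.C a) v)

/-- The join of two interpretations: take `v`'s value where defined, else `w`'s. -/
def joinI {A : Type*} (v w : A → TV) : A → TV :=
  fun a => if v a = TV.u then w a else v a

/-! ### Monotonicity of the characteristic operator -/

theorem ILE.completes {A : Type*} {v v' : A → TV} (h : ILE v v') {w : A → Bool}
    (hw : Completes w v') : Completes w v := by
  intro b
  rcases h b with h | h
  · simp [h]
  · rw [h]; exact hw b

theorem exists_completes {A : Type*} (v : A → TV) : ∃ w, Completes w v :=
  ⟨fun b => decide (v b = TV.t), fun b => by constructor <;> intro h <;> simp [h]⟩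

theorem gamma_eq_t {A : Type*} {D : ADF A} {v : A → TV} {a : A} :
    Gamma D v a = TV.t ↔ Irrefutable (D.C a) v := by
  unfold Gamma; split_ifs <;> simp_all

/-- Irrefutability takes precedence in the definition of `Gamma`; since every interpretation
has a completion, it excludes unsatisfiability and the precedence is harmless. -/
theorem gamma_eq_f {A : Type*} {D : ADF A} {v : A → TV} {a : A} :
    Gamma D v a = TV.f ↔ Unsat (D.C a) v := by
  have h : Unsat (D.C a) v → ¬ Irrefutable (D.C a) v := by
    intro h1 h2
    obtain ⟨w, hw⟩ := exists_completes v
    have := h1 w hw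
    simp [h2 w hw] at this
  unfold Gamma; split_ifs <;> simp_all

theorem ILE.gamma {A : Type*} (D : ADF A) {v v' : A → TV} (h : ILE v v') :
    ILE (Gamma D v) (Gamma D v') := by
  intro a
  cases ha : Gamma D v a with
  | u => exact Or.inl rfl
  | t => exact Or.inr (gamma_eq_t.2 fun w hw => gamma_eq_t.1 ha w (h.completes hw)).symm
  | f => exact Or.inr (gamma_eq_f.2 fun w hw => gamma_eq_f.1 ha w (h.completes hw)).symm

theorem ILE.eq_of_ne {A : Type*} {v v' : A → TV} (h : ILE v v') {a : A} (ha : v a ≠ TV.u) :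
    v' a = v a := ((h a).resolve_left ha).symm

theorem ILE.trans {A : Type*} {v₁ v₂ v₃ : A → TV} (h : ILE v₁ v₂) (h' : ILE v₂ v₃) :
    ILE v₁ v₃ := by
  intro a
  rcases h a with h | h
  · exact Or.inl h
  · exact h ▸ h' a

/-! ### The Kleene iteration of the characteristic operator -/

/-- The `n`-th iterate of `Gamma D` on the trivial interpretation. -/
noncomputable def stage {A : Type*} (D : ADF A) : ℕ → A → TV
  | 0 => trivialInterp A
  | n + 1 => Gamma D (stage D n)

theorem stage_le_succ {A : Type*} (D : ADF A) (n : ℕ) :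
    ILE (stage D n) (stage D (n + 1)) := by
  induction n with
  | zero => exact fun _ => Or.inl rfl
  | succ n ih => exact ih.gamma D

theorem stage_mono {A : Type*} (D : ADF A) {m n : ℕ} (h : m ≤ n) :
    ILE (stage D m) (stage D n) := by
  induction h with
  | refl => exact fun _ => Or.inr rfl
  | step _ ih => exact ih.trans (stage_le_succ D _)

theorem stage_le_fixed {A : Type*} {D : ADF A} {g : A → TV} (hg : Gamma D g = g) (n : ℕ) :
    ILE (stage D n) g := by
  induction n with
  | zero => exact fun _ => Or.inl rfl
  | succ n ih => exact hg ▸ ih.gamma D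

/-- The sets of decided arguments form an ascending chain in the finite lattice `Set A`,
so they stabilize, and with them the stages. -/
theorem exists_stage_fixed {A : Type*} [Finite A] (D : ADF A) :
    ∃ n, Gamma D (stage D n) = stage D n := by
  obtain ⟨n, hn⟩ := WellFoundedGT.monotone_chain_condition
    (⟨fun n => {a | stage D n a ≠ TV.u}, fun m n h a ha => by
      simpa [(stage_mono D h).eq_of_ne ha] using ha⟩ : ℕ →o Set A)
  refine ⟨n, funext fun a => ?_⟩
  have h : a ∈ {a | stage D n a ≠ TV.u} ↔ a ∈ {a | stage D (n + 1) a ≠ TV.u} :=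
    Set.ext_iff.1 (hn (n + 1) n.le_succ) a
  by_cases ha : stage D n a = TV.u
  · have : stage D (n + 1) a = TV.u := by simpa [ha] using h
    rw [ha]; exact this
  · exact (stage_le_succ D n).eq_of_ne ha

/-! ### Strong justification of the grounded interpretation -/

/-- An acceptance condition is determined by the values of the parents: two assignments
agreeing there are joined by single flips at non-parents. -/
theorem cond_congr {A : Type*} [Fintype A] [DecidableEq A] (D : ADF A) (a : A)
    (w w' : A → Bool) (h : ∀ b ∈ D.parents a, w b = w' b) : D.C a w = D.C a w' := by
  have key : ∀ s : Finset A, D.C a w = D.C a (fun b => if b ∈ s then w' b else w b) := by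
    intro s
    induction s using Finset.induction_on with
    | empty => simp
    | insert c s hc ih =>
      rw [ih]
      by_cases hcw : w c = w' c
      · congr 1
        funext b
        by_cases hb : b = c
        · subst hb; simp [hcw]
        · simp [hb]
      · have hp : c ∉ D.parents a := fun hp => hcw (h c hp)
        simp only [ADF.parents, Set.mem_ofPred_eq, not_exists, not_not] at hp
        rw [hp]
        congr 1
        funext b
        by_cases hb : b = c
        · subst hb
          simp only [Function.update_self, hc, if_false, Finset.mem_insert_self, if_true]
          revert hcw
          cases w b <;> cases w' b <;> simp
        · simp [hb]
  simpa using key Finset.univ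

/-- For evaluating the condition of `a`, the values that `v` gives to parents of `a` suffice. -/
theorem exists_completes_of_restrict {A : Type*} [Fintype A] [DecidableEq A] {D : ADF A}
    {v g : A → TV} (hvg : ILE v g) {a : A} {w : A → Bool}
    (hw : Completes w (restrictTV g {p | p ∈ D.parents a ∧ v p ≠ TV.u})) :
    ∃ w', Completes w' v ∧ D.C a w = D.C a w' := by
  classical
  obtain ⟨c, hc⟩ := exists_completes v
  refine ⟨fun b => if b ∈ D.parents a then w b else c b, fun b => ?_,
    cond_congr D a _ _ fun b hb => by simp [hb]⟩
  by_cases hb : b ∈ D.parents a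
  · by_cases hv : v b = TV.u
    · simp [hv]
    · have := hw b
      simpa [restrictTV, hb, hv, hvg.eq_of_ne hv] using this
  · simpa [hb] using hc b

/-- An argument decided at stage `n + 1` is justified by its parents decided at stage `n`.
The excluded set is only required to miss stage `n`; this is the invariant that survives the
recursion, since a parent first decided at stage `m + 1 ≤ n` is itself undecided at
stage `m`. -/
theorem sjrel_of_stage {A : Type*} [Fintype A] [DecidableEq A] {D : ADF A} {g : A → TV}
    (hg : Gamma D g = g) (n : ℕ) : ∀ (a : A) (E : Set A), stage D (n + 1) a ≠ TV.u →
      (∀ e ∈ E, stage D n e = TV.u) → SJrel D g Set.univ E a := by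
  induction n using Nat.strong_induction_on with
  | _ n ih =>
  intro a E ha hE
  have hga := (stage_le_fixed hg (n + 1)).eq_of_ne ha
  have hP : {p | p ∈ D.parents a ∧ stage D n p ≠ TV.u} ⊆ (D.parents a ∩ Set.univ) \ E :=
    fun p hp => ⟨⟨hp.1, trivial⟩, fun hpE => hp.2 (hE p hpE)⟩
  have hrec : ∀ p ∈ {p | p ∈ D.parents a ∧ stage D n p ≠ TV.u},
      SJrel D g Set.univ (E ∪ {p}) p := by
    rintro p ⟨-, hp⟩
    have hex : ∃ k, stage D k p ≠ TV.u := ⟨n, hp⟩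
    classical
    obtain ⟨k, hk, hmin⟩ : ∃ k, stage D k p ≠ TV.u ∧ ∀ m < k, stage D m p = TV.u :=
      ⟨Nat.find hex, Nat.find_spec hex, fun m hm => not_not.1 (Nat.find_min hex hm)⟩
    have hkn : k ≤ n := by
      by_contra hlt
      exact hp (hmin n (by omega))
    cases k with
    | zero => exact absurd rfl hk
    | succ m =>
      refine ih m (by omega) p _ hk ?_
      rintro e (he | rfl)
      · exact ((stage_mono D (by omega : m ≤ n)) e).elim id fun h => h.trans (hE e he)
      · exact hmin m (by omega)
  cases hv : stage D (n + 1) a with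
  | u => exact absurd hv ha
  | t =>
    refine SJrel.acc E a _ (hga.trans hv) hP (fun w hw => ?_) hrec
    obtain ⟨w', hw', he⟩ := exists_completes_of_restrict (stage_le_fixed hg n) hw
    exact he.trans (gamma_eq_t.1 hv w' hw')
  | f =>
    refine SJrel.den E a _ (hga.trans hv) hP (fun w hw => ?_) hrec
    obtain ⟨w', hw', he⟩ := exists_completes_of_restrict (stage_le_fixed hg n) hw
    exact he.trans (gamma_eq_f.1 hv w' hw')

/-! ### Maximality -/

theorem restrict_le {A : Type*} {v g : A → TV} {P : Set A} (h : ∀ p ∈ P, g p = v p) :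
    ILE (restrictTV v P) g := by
  intro b
  by_cases hb : b ∈ P
  · right; simp [restrictTV, hb, h b hb]
  · left; simp [restrictTV, hb]

/-- Any fixed point of `Gamma D` agrees with `v` on the justified arguments: the justifying
set `P` already has the same values in `g`, so it forces the value of `a` in `Gamma D g`. -/
theorem SJrel.eq_fixed {A : Type*} [DecidableEq A] {D : ADF A} {g v : A → TV}
    (hg : Gamma D g = g) {S E : Set A} {a : A} (h : SJrel D v S E a) : g a = v a := by
  induction h with
  | acc E a P ha _ hirr _ ih =>
    rw [ha, ← hg]
    exact gamma_eq_t.2 fun w hw => hirr w ((restrict_le ih).completes hw)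
  | den E a P ha _ hun _ ih =>
    rw [ha, ← hg]
    exact gamma_eq_f.2 fun w hw => hun w ((restrict_le ih).completes hw)

/-- The grounded interpretation is the greatest strongly admissible
interpretation: it is strongly admissible and every strongly admissible
interpretation is ≤_i below it. -/
theorem grounded_greatest_strongly_admissible {A : Type*} [Fintype A] [DecidableEq A]
    (D : ADF A) (g : A → TV) (hg : IsGrounded D g) :
    StronglyAdmissible D g ∧ ∀ w : A → TV, StronglyAdmissible D w → ILE w g := by
  refine ⟨fun a ha => ⟨Set.univ, ?_⟩, fun w hw a => ?_⟩
  · obtain ⟨N, hN⟩ := exists_stage_fixed D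
    have hgN : stage D N a ≠ TV.u := (hg.2 _ hN).eq_of_ne ha ▸ ha
    classical
    have hex : ∃ k, stage D k a ≠ TV.u := ⟨N, hgN⟩
    obtain ⟨k, hk, hmin⟩ : ∃ k, stage D k a ≠ TV.u ∧ ∀ m < k, stage D m a = TV.u :=
      ⟨Nat.find hex, Nat.find_spec hex, fun m hm => not_not.1 (Nat.find_min hex hm)⟩
    cases k with
    | zero => exact absurd rfl hk
    | succ m =>
      refine sjrel_of_stage hg.1 m a {a} hk ?_
      rintro e rfl
      exact hmin m (by omega)
  · by_cases ha : w a = TV.u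
    · exact Or.inl ha
    · obtain ⟨S, hS⟩ := hw a ha
      exact Or.inr (SJrel.eq_fixed hg.1 hS).symm
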